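/- Let f: ℝ → ℂ be a continuous 2π-periodic function, 0 ≤ α < 1/4, N a positive integer, x̃_{−N},…,x̃_N a set of α-perturbed nodes, and w̃_{−N},…,w̃_N the unique quadrature weights exact on T_N at these nodes. Writing Ĩ_N(f) = Σ_{j=−N}^{N} w̃_j f(x̃_j) and I(f) = ∫_{−π}^{π} f(x) dx, one has |Ĩ_N(f) − I(f)| ≤ (4π/(cos(πα) − sin(πα))) · min_{q ∈ T_N} ‖f − q‖_{L^∞[−π,π)}. -/

import Mathlib

open Real Finset

/-- `q` is a trigonometric polynomial of degree ≤ N. -/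
def IsTrigPoly (N : ℕ) (q : ℝ → ℂ) : Prop :=
  ∃ c : ℤ → ℂ, ∀ x : ℝ,
    q x = ∑ k ∈ Finset.Icc (-(N:ℤ)) (N:ℤ), c k * Complex.exp (Complex.I * (k : ℂ) * (x : ℂ))

/-- `x` is a set of α-perturbed nodes of size 2N+1. -/
def PerturbedNodes (N : ℕ) (α : ℝ) (x : ℤ → ℝ) : Prop :=
  ∀ j ∈ Finset.Icc (-(N:ℤ)) (N:ℤ),
    |x j - (j : ℝ) * (2*π/(2*N+1))| ≤ α * (2*π/(2*N+1))

/-- The weights `w` form a quadrature rule at the nodes `x` that is exact on `T_N`. -/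
def ExactQuad (N : ℕ) (x : ℤ → ℝ) (w : ℤ → ℝ) : Prop :=
  ∀ q : ℝ → ℂ, IsTrigPoly N q →
    ∑ j ∈ Finset.Icc (-(N:ℤ)) (N:ℤ), (w j : ℂ) * q (x j) = ∫ t in (-π)..π, q t

/-- The supremum of `‖g‖` over `[−π, π)`. -/
noncomputable def supIco (g : ℝ → ℂ) : ℝ :=
  ⨆ x : Set.Ico (-π) π, ‖g x‖

/-! Exactness on the exponentials `exp (i k t)`, `|k| ≤ N`, says that the matrix
`V = (exp (i k x̃_j))` sends the weights to a vector of norm `2π`, so a lower bound for `V` bounds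
`∑ |w̃_j|` by the Cauchy–Schwarz inequality. This bounds the quadrature error, which does not change
when `f` is replaced by `f - q`.

For equispaced nodes the matrix is `√(2N + 1)` times a unitary `U`. Perturbing the nodes multiplies
its entries by `exp (i δ_j t_k)` with `t_k ∈ [-π, π]`, and Kadec's argument for his `1/4`-theorem
controls this multiplier: expand `exp (i δ t)` in the functions `cos (m (t + π) / 2)`, which up to
signs are `1`, `cos n t` and `sin (n - 1/2) t`. Every term of the expansion of `exp (i δ_j t_k) - 1`
separates `j` from `k` and so acts on `U` by diagonal matrices on either side. The perturbation of
`U` thus has operator norm at most `∑_m sup_{|δ| ≤ α} |c_m(δ)| = 1 - cos πα + sin πα`, where the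
`c_m(δ)` are the coefficients of `exp (i δ t) - 1`. -/

theorem integral_neg_self_eq_integral_add_comp_neg {E : Type*} [NormedAddCommGroup E]
    [NormedSpace ℝ E] {f : ℝ → E} {a : ℝ}
    (hf : IntervalIntegrable f MeasureTheory.volume (-a) a) :
    ∫ x in (-a)..a, f x = ∫ x in 0..a, (f x + f (-x)) := by
  have h0 : (0 : ℝ) ∈ Set.uIcc (-a) a := by
    rcases le_total 0 a with ha | ha
    · exact Set.mem_uIcc_of_le (by linarith) ha
    · exact Set.mem_uIcc_of_ge ha (by linarith)
  have hleft : IntervalIntegrable f MeasureTheory.volume (-a) 0 :=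
    hf.mono_set (Set.uIcc_subset_uIcc_left h0)
  have hright : IntervalIntegrable f MeasureTheory.volume 0 a :=
    hf.mono_set (Set.uIcc_subset_uIcc_right h0)
  have hreflect : IntervalIntegrable (fun x => f (-x)) MeasureTheory.volume 0 a := by
    rw [IntervalIntegrable.iff_comp_neg]
    simpa using hleft.symm
  rw [intervalIntegral.integral_add hright hreflect, intervalIntegral.integral_comp_neg, neg_zero,
    add_comm, intervalIntegral.integral_add_adjacent_intervals hleft hright]

/-- The coefficients of the cosine series of `g` on `[0, π]`. They are indexed by `ℤ`, so that the
weight of the `|m|`-th cosine is shared between `m` and `-m`. -/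
noncomputable def cosineCoeff (g : ℝ → ℂ) (m : ℤ) : ℂ :=
  1 / π * ∫ θ in 0..π, Complex.cos (m * θ) * g θ

theorem cosineCoeff_neg (g : ℝ → ℂ) (m : ℤ) : cosineCoeff g (-m) = cosineCoeff g m := by
  simp [cosineCoeff, neg_mul, Complex.cos_neg]

theorem continuousOn_comp_abs {g : ℝ → ℂ} {a : ℝ} (hg : ContinuousOn g (Set.Icc 0 a)) :
    ContinuousOn (fun x => g |x|) (Set.Icc (-a) a) :=
  hg.comp continuous_abs.continuousOn fun x hx => ⟨abs_nonneg x, abs_le.2 hx⟩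

theorem fourier_coe_two_pi (m : ℤ) (θ : ℝ) :
    fourier m (θ : AddCircle (π - -π)) = Complex.exp (m * θ * Complex.I) := by
  have hπ : (π : ℂ) ≠ 0 := by exact_mod_cast pi_ne_zero
  rw [fourier_coe_apply]
  push_cast
  field_simp
  ring_nf

theorem fourierCoeffOn_comp_abs {g : ℝ → ℂ} (hg : ContinuousOn g (Set.Icc 0 π)) (m : ℤ) :
    fourierCoeffOn (neg_lt_self pi_pos) (fun θ => g |θ|) m = cosineCoeff g m := by
  have hint : IntervalIntegrable (fun θ : ℝ => Complex.exp (-(m * θ * Complex.I)) * g |θ|)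
      MeasureTheory.volume (-π) π :=
    ((by fun_prop : Continuous _).continuousOn.mul
      (continuousOn_comp_abs hg)).intervalIntegrable_of_Icc (by linarith [pi_pos])
  have hfold : ∫ θ in (-π)..π, Complex.exp (-(m * θ * Complex.I)) * g |θ| =
      2 * ∫ θ in 0..π, Complex.cos (m * θ) * g θ := by
    rw [integral_neg_self_eq_integral_add_comp_neg hint, ← intervalIntegral.integral_const_mul]
    refine intervalIntegral.integral_congr fun θ hθ => ?_
    rw [Set.uIcc_of_le pi_pos.le] at hθ
    simp only [abs_neg, abs_of_nonneg hθ.1, Complex.cos]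
    push_cast
    ring_nf
  simp only [fourierCoeffOn_eq_integral, fourier_coe_two_pi, Int.cast_neg, neg_mul, smul_eq_mul,
    hfold, cosineCoeff, Complex.real_smul]
  push_cast
  ring

theorem hasSum_cosineCoeff_mul_cos {g : ℝ → ℂ} (hg : ContinuousOn g (Set.Icc 0 π))
    (hs : Summable (cosineCoeff g)) {θ : ℝ} (hθ : θ ∈ Set.Icc 0 π) :
    HasSum (fun m : ℤ => cosineCoeff g m * Complex.cos (m * θ)) (g θ) := by
  have : Fact (0 < π - -π) := ⟨by linarith [pi_pos]⟩
  let G : C(AddCircle (π - -π), ℂ) :=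
    ⟨AddCircle.liftIco (π - -π) (-π) fun θ => g |θ|,
      AddCircle.liftIco_continuous (by simp) (by simpa using continuousOn_comp_abs hg)⟩
  have hcoeff : fourierCoeff G = cosineCoeff g := by
    ext m
    rw [← fourierCoeffOn_comp_abs hg m]
    convert! fourierCoeff_liftIco_eq (T := π - -π) (a := -π) (fun θ => g |θ|) m using 2
    simp
  -- The point `-θ` is used because `θ = π` is outside the fundamental domain `[-π, π)`.
  have hG : G (-θ : ℝ) = g θ := by
    have hmem : -θ ∈ Set.Ico (-π) (-π + (π - -π)) :=
      ⟨by linarith [hθ.2], by linarith [hθ.1, pi_pos]⟩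
    simp only [G, ContinuousMap.coe_mk, AddCircle.liftIco_coe_apply hmem, abs_neg,
      abs_of_nonneg hθ.1]
  have hsum := has_pointwise_sum_fourier_series_of_summable (f := G) (hcoeff ▸ hs)
    ((-θ : ℝ) : AddCircle (π - -π))
  simp only [hcoeff, hG, fourier_coe_two_pi, smul_eq_mul, Complex.ofReal_neg, mul_neg,
    neg_mul] at hsum
  have hsymm := (hsum.add ((Equiv.neg ℤ).hasSum_iff.2 hsum)).div_const 2
  simp only [Function.comp_apply, Equiv.neg_apply, cosineCoeff_neg, Int.cast_neg, neg_mul,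
    neg_neg, ← mul_add, add_self_div_two, mul_div_assoc] at hsymm
  simpa only [Complex.cos, neg_mul, add_comm] using hsymm

theorem integral_cos_mul_exp {m : ℤ} {δ : ℝ} (hm : (m : ℝ) ^ 2 ≠ 4 * δ ^ 2) :
    ∫ θ in 0..π, Complex.cos (m * θ) * Complex.exp (δ * (2 * θ - π) * Complex.I) =
      2 * δ * Complex.I * ((-1) ^ m * Complex.exp (π * δ * Complex.I) -
        Complex.exp (-(π * δ * Complex.I))) / (m ^ 2 - 4 * δ ^ 2) := by
  have hm' : (m ^ 2 - 4 * δ ^ 2 : ℂ) ≠ 0 := by exact_mod_cast sub_ne_zero.2 hm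
  have hderiv (z : ℂ) : HasDerivAt (fun z : ℂ =>
      (m * Complex.sin (m * z) + 2 * δ * Complex.I * Complex.cos (m * z)) *
        Complex.exp (δ * (2 * z - π) * Complex.I) / (m ^ 2 - 4 * δ ^ 2))
      (Complex.cos (m * z) * Complex.exp (δ * (2 * z - π) * Complex.I)) z := by
    have hmul := (hasDerivAt_id' z).const_mul (m : ℂ)
    have htrig := (hmul.csin.const_mul (m : ℂ)).add (hmul.ccos.const_mul (2 * δ * Complex.I))
    have hexp := (((((hasDerivAt_id' z).const_mul 2).sub_const (π : ℂ)).const_mul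
      (δ : ℂ)).mul_const Complex.I).cexp
    refine ((htrig.mul hexp).div_const (m ^ 2 - 4 * δ ^ 2 : ℂ)).congr_deriv ?_
    rw [div_eq_iff hm', Pi.add_apply]
    linear_combination (4 * δ ^ 2 * Complex.cos (m * z) *
      Complex.exp (δ * (2 * z - π) * Complex.I)) * Complex.I_sq
  have hsin : Complex.sin (m * π) = 0 := Complex.sin_int_mul_pi m
  have hcos : Complex.cos (m * π) = (-1) ^ m := by
    simpa using congrArg Complex.ofReal (Real.cos_int_mul_pi m)
  rw [intervalIntegral.integral_eq_sub_of_hasDerivAt (fun θ _ => (hderiv θ).comp_ofReal)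
    ((by fun_prop : Continuous _).intervalIntegrable _ _), hsin, hcos]
  simp only [Complex.ofReal_zero, mul_zero, Complex.sin_zero, Complex.cos_zero]
  ring_nf

/-- The cosine coefficients of `exp (i δ t)` on `[-π, π]`, in the variable `θ = (t + π) / 2`. -/
noncomputable def kadecCoeff (δ : ℝ) : ℤ → ℂ :=
  cosineCoeff fun θ => Complex.exp (δ * (2 * θ - π) * Complex.I)

theorem kadecCoeff_of_even {m : ℤ} {δ : ℝ} (hm : (m : ℝ) ^ 2 ≠ 4 * δ ^ 2) (heven : Even m) :
    kadecCoeff δ m =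
      (-(4 * (π * δ * sin (π * δ)) / (π ^ 2 * (m ^ 2 - 4 * δ ^ 2))) : ℝ) := by
  have hπ : (π : ℂ) ≠ 0 := by exact_mod_cast pi_ne_zero
  rw [kadecCoeff, cosineCoeff, integral_cos_mul_exp hm, heven.neg_one_zpow]
  push_cast
  rw [Complex.sin]
  field_simp
  ring

theorem kadecCoeff_of_odd {m : ℤ} {δ : ℝ} (hm : (m : ℝ) ^ 2 ≠ 4 * δ ^ 2) (hodd : Odd m) :
    kadecCoeff δ m =
      (-(4 * (π * δ * cos (π * δ)) / (π ^ 2 * (m ^ 2 - 4 * δ ^ 2))) : ℝ) * Complex.I := by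
  have hπ : (π : ℂ) ≠ 0 := by exact_mod_cast pi_ne_zero
  rw [kadecCoeff, cosineCoeff, integral_cos_mul_exp hm, hodd.neg_one_zpow]
  push_cast
  rw [Complex.cos]
  field_simp
  ring

theorem kadecCoeff_zero_right (δ : ℝ) : kadecCoeff δ 0 = sinc (π * δ) := by
  rcases eq_or_ne δ 0 with rfl | hδ
  · simp [kadecCoeff, cosineCoeff, pi_ne_zero]
  · rw [kadecCoeff_of_even (by simpa using hδ) Even.zero,
      sinc_of_ne_zero (mul_ne_zero pi_ne_zero hδ)]
    congr 1
    field_simp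
    simp only [Int.cast_zero]
    ring

theorem antitoneOn_sinc : AntitoneOn sinc (Set.Icc 0 π) := by
  intro x hx y hy hxy
  rcases hx.1.eq_or_lt with rfl | hx0
  · simpa using sinc_le_one y
  have hy0 : 0 < y := hx0.trans_le hxy
  have hslope := strictConcaveOn_sin_Icc.concaveOn.slope_anti (Set.left_mem_Icc.2 pi_pos.le)
    ⟨hx, hx0.ne'⟩ ⟨hy, hy0.ne'⟩ hxy
  rwa [sinc_eq_dslope, dslope_of_ne _ hx0.ne', dslope_of_ne _ hy0.ne']

theorem monotoneOn_mul_cos : MonotoneOn (fun x => x * cos x) (Set.Icc 0 (π / 4)) := by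
  refine monotoneOn_of_hasDerivWithinAt_nonneg (convex_Icc _ _) (by fun_prop)
    (fun x _ => ((hasDerivAt_id x).mul (hasDerivAt_cos x)).hasDerivWithinAt) fun x hx => ?_
  rw [interior_Icc] at hx
  have hsin : 0 ≤ sin x := sin_nonneg_of_nonneg_of_le_pi hx.1.le (by linarith [hx.1, hx.2])
  have hsin_le : sin x ≤ cos x := by
    rw [← sin_pi_div_two_sub]
    exact sin_le_sin_of_le_of_le_pi_div_two (by linarith [hx.1, pi_pos]) (by linarith [hx.1])
      (by linarith [hx.2])
  have hmul : x * sin x ≤ 1 * sin x :=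
    mul_le_mul_of_nonneg_right (by linarith [hx.2, pi_le_four]) hsin
  simp only [id]
  linarith

theorem abs_mul_cos_le_mul_cos {x y : ℝ} (hxy : |x| ≤ y) (hy : y ≤ π / 4) :
    |x * cos x| ≤ y * cos y := by
  have hcos : 0 ≤ cos |x| := cos_nonneg_of_neg_pi_div_two_le_of_le
    (by linarith [abs_nonneg x, pi_pos]) (by linarith [pi_pos])
  rw [abs_mul, ← cos_abs x, abs_of_nonneg hcos]
  exact monotoneOn_mul_cos ⟨abs_nonneg x, hxy.trans hy⟩ ⟨(abs_nonneg x).trans hxy, hy⟩ hxy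

theorem abs_mul_sin_le_mul_sin {x y : ℝ} (hxy : |x| ≤ y) (hy : y ≤ π / 2) :
    |x * sin x| ≤ y * sin y := by
  have hx0 := abs_nonneg x
  rw [abs_mul, abs_sin_eq_sin_abs_of_abs_le_pi (by linarith [pi_pos])]
  exact mul_le_mul hxy (sin_le_sin_of_le_of_le_pi_div_two (by linarith) hy hxy)
    (sin_nonneg_of_nonneg_of_le_pi hx0 (by linarith [pi_pos])) (hx0.trans hxy)

theorem sinc_le_sinc_of_abs_le {x y : ℝ} (hxy : |x| ≤ y) (hy : y ≤ π) : sinc y ≤ sinc x := by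
  have hx : sinc |x| = sinc x := by rcases abs_choice x with h | h <;> simp [h]
  rw [← hx]
  exact antitoneOn_sinc ⟨abs_nonneg x, hxy.trans hy⟩ ⟨(abs_nonneg x).trans hxy, hy⟩ hxy

theorem four_mul_sq_le_int_sq_div_four {δ : ℝ} (hδ : |δ| ≤ 1 / 4) {m : ℤ} (hm : m ≠ 0) :
    4 * δ ^ 2 ≤ (m : ℝ) ^ 2 / 4 := by
  have hm1 : (1 : ℝ) ≤ (m : ℝ) ^ 2 := by exact_mod_cast sq_pos_of_ne_zero hm
  have hδ2 : δ ^ 2 ≤ (1 / 4) ^ 2 := sq_le_sq' (abs_le.1 hδ).1 (abs_le.1 hδ).2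
  linarith

theorem int_sq_ne_four_mul_sq {δ : ℝ} (hδ : |δ| ≤ 1 / 4) {m : ℤ} (hm : m ≠ 0) :
    (m : ℝ) ^ 2 ≠ 4 * δ ^ 2 := by
  have hm0 : (0 : ℝ) < (m : ℝ) ^ 2 := by positivity
  linarith [four_mul_sq_le_int_sq_div_four hδ hm]

theorem abs_neg_four_mul_div_sq_sub_le {p P δ α : ℝ} (hp : |p| ≤ P) (hδ : |δ| ≤ α) (hα : α ≤ 1 / 4)
    {m : ℤ} (hm : m ≠ 0) :
    |-(4 * p / (π ^ 2 * (m ^ 2 - 4 * δ ^ 2)))| ≤ 4 * P / (π ^ 2 * (m ^ 2 - 4 * α ^ 2)) := by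
  have hm0 : (0 : ℝ) < (m : ℝ) ^ 2 := by positivity
  have hα' : |α| ≤ 1 / 4 := (abs_of_nonneg ((abs_nonneg δ).trans hδ)).trans_le hα
  have hα_pos : (0 : ℝ) < m ^ 2 - 4 * α ^ 2 := by linarith [four_mul_sq_le_int_sq_div_four hα' hm]
  have hle : (m ^ 2 - 4 * α ^ 2 : ℝ) ≤ m ^ 2 - 4 * δ ^ 2 := by
    linarith [sq_le_sq' (abs_le.1 hδ).1 (abs_le.1 hδ).2]
  have hδ_pos : (0 : ℝ) < m ^ 2 - 4 * δ ^ 2 := hα_pos.trans_le hle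
  rw [abs_neg, abs_div, abs_mul, abs_of_pos (by positivity : (0 : ℝ) < 4),
    abs_of_pos (by positivity : 0 < π ^ 2 * (m ^ 2 - 4 * δ ^ 2))]
  have hP : 0 ≤ P := (abs_nonneg p).trans hp
  gcongr

theorem norm_kadecCoeff_le_one_div_sq {δ : ℝ} (hδ : |δ| ≤ 1 / 4) {m : ℤ} (hm : m ≠ 0) :
    ‖kadecCoeff δ m‖ ≤ 1 / (m : ℝ) ^ 2 := by
  have hm1 : (1 : ℝ) ≤ (m : ℝ) ^ 2 := by exact_mod_cast sq_pos_of_ne_zero hm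
  have hbound {y : ℝ} (hy : |y| ≤ 1) :
      |-(4 * (π * δ * y) / (π ^ 2 * (m ^ 2 - 4 * δ ^ 2)))| ≤ 1 / (m : ℝ) ^ 2 := by
    have hp : |π * δ * y| ≤ π / 4 := by
      rw [abs_mul, abs_mul, abs_of_pos pi_pos]
      calc π * |δ| * |y| ≤ π * (1 / 4) * 1 := by gcongr
        _ = π / 4 := by ring
    refine (abs_neg_four_mul_div_sq_sub_le hp hδ le_rfl hm).trans ?_
    have hden : (0 : ℝ) < m ^ 2 - 4 * (1 / 4) ^ 2 := by linarith
    rw [div_le_div_iff₀ (by positivity) (by positivity)]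
    have hsq : (m : ℝ) ^ 2 ≤ π * (m ^ 2 - 4 * (1 / 4) ^ 2) := by
      linarith [mul_le_mul_of_nonneg_right pi_gt_three.le hden.le]
    linarith [mul_le_mul_of_nonneg_left hsq pi_pos.le]
  have hne := int_sq_ne_four_mul_sq hδ hm
  rcases Int.even_or_odd m with heven | hodd
  · rw [kadecCoeff_of_even hne heven, Complex.norm_real]
    exact hbound (abs_sin_le_one _)
  · rw [kadecCoeff_of_odd hne hodd, norm_mul, Complex.norm_real, Complex.norm_I, mul_one]
    exact hbound (abs_cos_le_one _)

theorem summable_kadecCoeff {δ : ℝ} (hδ : |δ| ≤ 1 / 4) : Summable (kadecCoeff δ) :=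
  .of_norm_bounded_eventually (Real.summable_one_div_int_pow.2 one_lt_two) <|
    (Set.finite_singleton 0).subset fun _ hm => by_contra fun hm0 =>
      hm (norm_kadecCoeff_le_one_div_sq hδ hm0)

theorem hasSum_kadecCoeff_mul_cos {δ t : ℝ} (hδ : |δ| ≤ 1 / 4) (ht : t ∈ Set.Icc (-π) π) :
    HasSum (fun m : ℤ => kadecCoeff δ m * Complex.cos (m * ((t + π) / 2 : ℝ)))
      (Complex.exp (δ * t * Complex.I)) := by
  have hθ : (t + π) / 2 ∈ Set.Icc 0 π := ⟨by linarith [ht.1], by linarith [ht.2]⟩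
  convert! hasSum_cosineCoeff_mul_cos (by fun_prop) (summable_kadecCoeff hδ) hθ using 2
  push_cast
  ring_nf

theorem hasSum_kadecCoeff_sub_mul_cos {δ t : ℝ} (hδ : |δ| ≤ 1 / 4)
    (ht : t ∈ Set.Icc (-π) π) :
    HasSum (fun m : ℤ => Complex.cos (m * ((t + π) / 2 : ℝ)) *
      (kadecCoeff δ m - if m = 0 then 1 else 0)) (Complex.exp (δ * t * Complex.I) - 1) := by
  convert! (hasSum_kadecCoeff_mul_cos hδ ht).sub (hasSum_ite_eq (0 : ℤ) (1 : ℂ)) using 2 with m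
  rcases eq_or_ne m 0 with rfl | hm
  · simp
  · simp [hm, mul_comm]

/-- A bound for the coefficients of `exp (i δ t) - 1` that is uniform in `|δ| ≤ α`. All terms are
nonnegative since `kadecCoeff α m` is `sinc (π α)` for `m = 0` and otherwise a nonpositive multiple
of `1` or `i`, so the sum of the bounds is a value of the cosine series itself: that at
`t = -π`, where every cosine is `1`. -/
noncomputable def kadecBound (α : ℝ) (m : ℤ) : ℝ :=
  (if m = 0 then 1 else 0) - (kadecCoeff α m).re - (kadecCoeff α m).im

theorem hasSum_kadecBound {α : ℝ} (hα : |α| ≤ 1 / 4) :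
    HasSum (kadecBound α) (1 - (cos (π * α) - sin (π * α))) := by
  have hend : HasSum (kadecCoeff α) (Complex.exp ((-(π * α) : ℝ) * Complex.I)) := by
    convert! hasSum_kadecCoeff_mul_cos hα (Set.left_mem_Icc.2 (neg_le_self pi_pos.le)) using 2
    · simp
    · push_cast
      ring_nf
  convert! ((hasSum_ite_eq (0 : ℤ) (1 : ℝ)).sub (Complex.reCLM.hasSum hend)).sub
    (Complex.imCLM.hasSum hend) using 1
  simp only [Complex.reCLM_apply, Complex.imCLM_apply, Complex.exp_ofReal_mul_I_re,
    Complex.exp_ofReal_mul_I_im, cos_neg, sin_neg]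
  ring

theorem norm_kadecCoeff_sub_le_kadecBound {δ α : ℝ} (hδ : |δ| ≤ α) (hα : α ≤ 1 / 4) (m : ℤ) :
    ‖kadecCoeff δ m - if m = 0 then 1 else 0‖ ≤ kadecBound α m := by
  have hα' : |α| ≤ 1 / 4 := (abs_of_nonneg ((abs_nonneg δ).trans hδ)).trans_le hα
  have hπδ : |π * δ| ≤ π * α := by
    rw [abs_mul, abs_of_pos pi_pos]
    exact mul_le_mul_of_nonneg_left hδ pi_pos.le
  have hπα : π * α ≤ π / 4 := by
    linarith [mul_le_mul_of_nonneg_left hα pi_pos.le]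
  rw [kadecBound]
  rcases eq_or_ne m 0 with rfl | hm
  · rw [if_pos rfl, if_pos rfl, kadecCoeff_zero_right, kadecCoeff_zero_right, norm_sub_rev,
      ← Complex.ofReal_one, ← Complex.ofReal_sub, Complex.norm_real, norm_of_nonneg
      (sub_nonneg.2 (sinc_le_one _)), Complex.ofReal_re, Complex.ofReal_im, sub_zero]
    exact sub_le_sub_left (sinc_le_sinc_of_abs_le hπδ (by linarith [pi_pos])) 1
  rw [if_neg hm, if_neg hm, sub_zero]
  have hδne := int_sq_ne_four_mul_sq (hδ.trans hα) hm
  have hαne := int_sq_ne_four_mul_sq hα' hm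
  rcases Int.even_or_odd m with heven | hodd
  · rw [kadecCoeff_of_even hδne heven, kadecCoeff_of_even hαne heven, Complex.norm_real,
      Complex.ofReal_re, Complex.ofReal_im, zero_sub, neg_neg, sub_zero]
    exact abs_neg_four_mul_div_sq_sub_le
      (abs_mul_sin_le_mul_sin hπδ (by linarith [pi_pos])) hδ hα hm
  · rw [kadecCoeff_of_odd hδne hodd, kadecCoeff_of_odd hαne hodd, norm_mul, Complex.norm_real,
      Complex.norm_I, mul_one, Complex.re_ofReal_mul, Complex.im_ofReal_mul, Complex.I_re,
      Complex.I_im, mul_zero, mul_one, zero_sub, neg_zero, zero_sub, neg_neg]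
    exact abs_neg_four_mul_div_sq_sub_le (abs_mul_cos_le_mul_cos hπδ hπα) hδ hα hm

section OperatorNorm

open scoped Matrix Matrix.Norms.L2Operator

theorem norm_hadamard_le_of_hasSum {𝕜 ι m n : Type*} [RCLike 𝕜] [Fintype m]
    [Fintype n] [DecidableEq n] {e : ι → m → 𝕜} {a : ι → n → 𝕜} {Φ : Matrix m n 𝕜} {B : ι → ℝ}
    {L : ℝ} (hB : HasSum B L) (he : ∀ i, ‖e i‖ ≤ 1) (ha : ∀ i, ‖a i‖ ≤ B i)
    (hΦ : ∀ k j, HasSum (fun i => e i k * a i j) (Φ k j)) (U : Matrix m n 𝕜) :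
    ‖U ⊙ Φ‖ ≤ L * ‖U‖ := by
  classical
  have hsum : HasSum (fun i => Matrix.diagonal (e i) * U * Matrix.diagonal (a i)) (U ⊙ Φ) := by
    refine Pi.hasSum.2 fun k => Pi.hasSum.2 fun j => ?_
    simp only [Matrix.mul_diagonal, Matrix.diagonal_mul, Matrix.hadamard_apply]
    convert! (hΦ k j).mul_left (U k j) using 2
    ring
  refine hsum.norm_le_of_bounded (hB.mul_right ‖U‖) fun i => ?_
  calc ‖Matrix.diagonal (e i) * U * Matrix.diagonal (a i)‖
      ≤ ‖e i‖ * ‖U‖ * ‖a i‖ := by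
        rw [← Matrix.l2_opNorm_diagonal (e i), ← Matrix.l2_opNorm_diagonal (a i)]
        exact (Matrix.l2_opNorm_mul _ _).trans
          (mul_le_mul_of_nonneg_right (Matrix.l2_opNorm_mul _ _) (norm_nonneg _))
    _ ≤ 1 * ‖U‖ * B i := by gcongr; exacts [he i, ha i]
    _ = B i * ‖U‖ := by ring

theorem norm_hadamard_exp_sub_one_le {m n : Type*} [Fintype m] [Fintype n]
    [DecidableEq n] [Nonempty n] {α : ℝ} (hα : α ≤ 1 / 4) {t : m → ℝ}
    (ht : ∀ k, t k ∈ Set.Icc (-π) π) {δ : n → ℝ} (hδ : ∀ j, |δ j| ≤ α) (U : Matrix m n ℂ) :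
    ‖U ⊙ Matrix.of fun k j => Complex.exp (δ j * t k * Complex.I) - 1‖ ≤
      (1 - (cos (π * α) - sin (π * α))) * ‖U‖ := by
  have j₀ := Classical.arbitrary n
  have hα' : |α| ≤ 1 / 4 := (abs_of_nonneg ((abs_nonneg _).trans (hδ j₀))).trans_le hα
  refine norm_hadamard_le_of_hasSum (hasSum_kadecBound hα')
    (e := fun (i : ℤ) k => Complex.cos (i * ((t k + π) / 2 : ℝ)))
    (a := fun (i : ℤ) j => kadecCoeff (δ j) i - if i = 0 then 1 else 0) (fun i => ?_) (fun i => ?_)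
    (fun k j => hasSum_kadecCoeff_sub_mul_cos ((hδ j).trans hα) (ht k)) U
  · refine (pi_norm_le_iff_of_nonneg zero_le_one).2 fun k => ?_
    rw [← Complex.ofReal_intCast, ← Complex.ofReal_mul, ← Complex.ofReal_cos, Complex.norm_real]
    exact abs_cos_le_one _
  · exact (pi_norm_le_iff_of_nonempty _).2 fun j => norm_kadecCoeff_sub_le_kadecBound (hδ j) hα i

theorem norm_mulVec_of_conjTranspose_mul_self {𝕜 m n : Type*} [RCLike 𝕜] [Fintype m]
    [Fintype n] [DecidableEq n] {A : Matrix m n 𝕜} {c : ℝ} (h : Aᴴ * A = (c : 𝕜) • 1)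
    (v : n → 𝕜) : ‖WithLp.toLp 2 (A *ᵥ v)‖ = √c * ‖WithLp.toLp 2 v‖ := by
  have hsq : ‖WithLp.toLp 2 (A *ᵥ v)‖ ^ 2 = c * ‖WithLp.toLp 2 v‖ ^ 2 := by
    rw [← RCLike.ofReal_inj (K := 𝕜)]
    push_cast
    rw [← inner_self_eq_norm_sq_to_K, ← inner_self_eq_norm_sq_to_K, EuclideanSpace.inner_toLp_toLp,
      EuclideanSpace.inner_toLp_toLp, dotProduct_comm, dotProduct_comm v, Matrix.star_mulVec,
      ← Matrix.dotProduct_mulVec, Matrix.mulVec_mulVec, h, Matrix.smul_mulVec, Matrix.one_mulVec,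
      dotProduct_smul, smul_eq_mul]
  rw [← Real.sqrt_sq (norm_nonneg (WithLp.toLp 2 (A *ᵥ v))), hsq,
    Real.sqrt_mul' _ (sq_nonneg _), Real.sqrt_sq (norm_nonneg _)]

theorem l2_opNorm_le_sqrt_of_conjTranspose_mul_self {𝕜 m n : Type*} [RCLike 𝕜] [Fintype m]
    [Fintype n] [DecidableEq n] {A : Matrix m n 𝕜} {c : ℝ} (h : Aᴴ * A = (c : 𝕜) • 1) :
    ‖A‖ ≤ √c :=
  ContinuousLinearMap.opNorm_le_bound _ (Real.sqrt_nonneg c) fun v =>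
    (norm_mulVec_of_conjTranspose_mul_self h v.ofLp).le

theorem sum_Icc_neg_zpow_mul_sub_one {K : Type*} [Field K] {z : K} (hz : z ≠ 0) (N : ℕ) :
    (∑ k ∈ Finset.Icc (-(N : ℤ)) N, z ^ k) * (z - 1) = z ^ (N + 1 : ℤ) - z ^ (-N : ℤ) := by
  have htele := Finset.sum_Ico_int_sub N fun k : ℤ => z ^ k
  simp only [zpow_add_one₀ hz, Finset.sum_sub_distrib, ← Finset.sum_mul] at htele
  rw [Finset.sum_Icc_eq_sum_Ico_add _ (by lia), zpow_add_one₀ hz]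
  linear_combination -htele

theorem sum_Icc_neg_zpow_eq_zero {K : Type*} [Field K] {z : K} {N : ℕ} (hz : z ≠ 1)
    (hzN : z ^ (2 * N + 1) = 1) : ∑ k ∈ Finset.Icc (-(N : ℤ)) N, z ^ k = 0 := by
  have hz0 : z ≠ 0 := fun h => by simp [h] at hzN
  have hpow : z ^ (N + 1 : ℤ) = z ^ (-N : ℤ) := by
    have hshift : z ^ (N + 1 : ℤ) = z ^ (-N : ℤ) * z ^ ((2 * N + 1 : ℕ) : ℤ) := by
      rw [← zpow_add₀ hz0]
      push_cast
      ring_nf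
    rw [hshift, zpow_natCast, hzN, mul_one]
  refine (mul_eq_zero.1 ?_).resolve_right (sub_ne_zero.2 hz)
  rw [sum_Icc_neg_zpow_mul_sub_one hz0, hpow, sub_self]

theorem card_Icc_neg_natCast (N : ℕ) : #(Finset.Icc (-(N : ℤ)) N) = 2 * N + 1 := by
  rw [Int.card_Icc]
  lia

/-- The node `j h`, `h = 2π / (2N + 1)`, of which `PerturbedNodes` are perturbations. -/
noncomputable def equispacedNode (N : ℕ) (j : ℤ) : ℝ := j * (2 * π / (2 * N + 1))

theorem sum_exp_mul_equispacedNode_sub (N : ℕ) {j l : ℤ} (hj : j ∈ Finset.Icc (-(N : ℤ)) N)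
    (hl : l ∈ Finset.Icc (-(N : ℤ)) N) :
    ∑ k ∈ Finset.Icc (-(N : ℤ)) N,
      Complex.exp (k * (Complex.I * (equispacedNode N l - equispacedNode N j))) =
      if j = l then (2 * N + 1 : ℂ) else 0 := by
  have hN : (2 * N + 1 : ℂ) ≠ 0 := by exact_mod_cast (2 * N).succ_ne_zero
  have hπ : (π : ℂ) ≠ 0 := by exact_mod_cast pi_ne_zero
  split_ifs with hjl
  · simp only [hjl, sub_self, mul_zero, Complex.exp_zero, Finset.sum_const, card_Icc_neg_natCast,
      nsmul_eq_mul, mul_one]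
    push_cast
    rfl
  simp only [Complex.exp_int_mul]
  refine sum_Icc_neg_zpow_eq_zero (fun hone => hjl ?_) ?_
  · obtain ⟨n, hn⟩ := Complex.exp_eq_one_iff.1 hone
    have hdvd : (2 * N + 1 : ℤ) ∣ l - j := by
      refine ⟨n, ?_⟩
      rw [← Int.cast_inj (α := ℂ)]
      simp only [equispacedNode] at hn
      push_cast at hn ⊢
      field_simp at hn
      linear_combination hn
    rw [Finset.mem_Icc] at hj hl
    have := Int.eq_zero_of_abs_lt_dvd hdvd (abs_lt.2 (by lia))
    lia
  · rw [← Complex.exp_nat_mul, Complex.exp_eq_one_iff]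
    refine ⟨l - j, ?_⟩
    simp only [equispacedNode]
    push_cast
    field_simp

/-- The matrix `(exp (i k x_j))` which evaluates the exponentials spanning `T_N`, indexed by the row
`k`, at the nodes `x_j`, indexed by the column `j`. -/
noncomputable def expMatrix (N : ℕ) (x : ℤ → ℝ) :
    Matrix (Finset.Icc (-(N : ℤ)) N) (Finset.Icc (-(N : ℤ)) N) ℂ :=
  Matrix.of fun k j => Complex.exp (Complex.I * (k : ℤ) * x j)

theorem expMatrix_equispacedNode_conjTranspose_mul_self (N : ℕ) :
    (expMatrix N (equispacedNode N))ᴴ * expMatrix N (equispacedNode N) =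
      ((2 * N + 1 : ℝ) : ℂ) • 1 := by
  ext j l
  rw [Matrix.smul_apply, Matrix.one_apply, smul_ite, smul_zero, smul_eq_mul, mul_one]
  push_cast
  simp only [Subtype.ext_iff, ← sum_exp_mul_equispacedNode_sub N j.2 l.2, Matrix.mul_apply,
    Matrix.conjTranspose_apply, expMatrix, Matrix.of_apply, RCLike.star_def, ← Complex.exp_conj,
    ← Complex.exp_add, map_mul, Complex.conj_I, map_intCast, Complex.conj_ofReal]
  rw [← Finset.sum_coe_sort (M := ℂ) (Finset.Icc (-(N : ℤ)) N)]
  refine Finset.sum_congr rfl fun k _ => ?_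
  ring_nf

/-- The displacements of the nodes `x`, as multiples of the spacing `2π / (2N + 1)`. -/
noncomputable def nodeShift (N : ℕ) (x : ℤ → ℝ) (j : ℤ) : ℝ :=
  (x j - equispacedNode N j) / (2 * π / (2 * N + 1))

theorem PerturbedNodes.abs_nodeShift_le {N : ℕ} {α : ℝ} {x : ℤ → ℝ} (hx : PerturbedNodes N α x)
    {j : ℤ} (hj : j ∈ Finset.Icc (-(N : ℤ)) N) : |nodeShift N x j| ≤ α := by
  have hh : 0 < 2 * π / (2 * N + 1) := by positivity
  rw [nodeShift, abs_div, abs_of_pos hh, div_le_iff₀ hh]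
  exact hx j hj

theorem abs_equispacedNode_add_le_pi {N : ℕ} {k : ℤ} (hk : k ∈ Finset.Icc (-(N : ℤ)) N) :
    |equispacedNode N k| + π / (2 * N + 1) ≤ π := by
  have hk' : |(k : ℝ)| ≤ N := by exact_mod_cast abs_le.2 (Finset.mem_Icc.1 hk)
  have hh : 0 < 2 * π / (2 * N + 1) := by positivity
  rw [equispacedNode, abs_mul, abs_of_pos hh]
  calc |(k : ℝ)| * (2 * π / (2 * N + 1)) + π / (2 * N + 1)
      ≤ N * (2 * π / (2 * N + 1)) + π / (2 * N + 1) := by gcongr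
    _ = π := by field_simp

theorem equispacedNode_mem_Icc {N : ℕ} {k : ℤ} (hk : k ∈ Finset.Icc (-(N : ℤ)) N) :
    equispacedNode N k ∈ Set.Icc (-π) π := by
  have hpos : 0 ≤ π / (2 * N + 1) := by positivity
  exact abs_le.1 (by linarith [abs_equispacedNode_add_le_pi hk])

theorem PerturbedNodes.mem_Ico {N : ℕ} {α : ℝ} (hα : α < 1 / 2) {x : ℤ → ℝ}
    (hx : PerturbedNodes N α x) {j : ℤ} (hj : j ∈ Finset.Icc (-(N : ℤ)) N) :
    x j ∈ Set.Ico (-π) π := by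
  have hshift : |x j - equispacedNode N j| < π / (2 * N + 1) :=
    calc |x j - equispacedNode N j| ≤ α * (2 * π / (2 * N + 1)) := hx j hj
      _ < 1 / 2 * (2 * π / (2 * N + 1)) := by gcongr
      _ = π / (2 * N + 1) := by ring
  have hlt : |x j| < π := by
    linarith [abs_sub_abs_le_abs_sub (x j) (equispacedNode N j), abs_equispacedNode_add_le_pi hj]
  exact ⟨(abs_lt.1 hlt).1.le, (abs_lt.1 hlt).2⟩

theorem PerturbedNodes.nonneg {N : ℕ} {α : ℝ} {x : ℤ → ℝ} (hx : PerturbedNodes N α x) : 0 ≤ α :=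
  (abs_nonneg _).trans (hx.abs_nodeShift_le (j := 0) (by simp))

theorem expMatrix_eq_add_hadamard (N : ℕ) (x : ℤ → ℝ) :
    expMatrix N x = expMatrix N (equispacedNode N) + expMatrix N (equispacedNode N) ⊙
      Matrix.of fun k j : Finset.Icc (-(N : ℤ)) N =>
        Complex.exp (nodeShift N x j * equispacedNode N k * Complex.I) - 1 := by
  have hN : (2 * N + 1 : ℂ) ≠ 0 := by exact_mod_cast (2 * N).succ_ne_zero
  have hπ : (π : ℂ) ≠ 0 := by exact_mod_cast pi_ne_zero
  ext k j
  simp only [expMatrix, Matrix.add_apply, Matrix.hadamard_apply, Matrix.of_apply, mul_sub, mul_one,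
    add_sub_cancel, ← Complex.exp_add]
  congr 1
  simp only [nodeShift, equispacedNode]
  push_cast
  field_simp
  ring

theorem PerturbedNodes.le_norm_expMatrix_mulVec {N : ℕ} {α : ℝ} (hα : α ≤ 1 / 4) {x : ℤ → ℝ}
    (hx : PerturbedNodes N α x) (v : Finset.Icc (-(N : ℤ)) N → ℂ) :
    (cos (π * α) - sin (π * α)) * (√(2 * N + 1) * ‖WithLp.toLp 2 v‖) ≤
      ‖WithLp.toLp 2 (expMatrix N x *ᵥ v)‖ := by
  have : Nonempty (Finset.Icc (-(N : ℤ)) N) := ⟨⟨0, by simp⟩⟩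
  have hgap : 0 ≤ 1 - (cos (π * α) - sin (π * α)) := by
    have hsin : 0 ≤ sin (π * α) := sin_nonneg_of_nonneg_of_le_pi
      (mul_nonneg pi_pos.le hx.nonneg) (mul_le_of_le_one_right pi_pos.le (by linarith))
    linarith [cos_le_one (π * α)]
  have hU := expMatrix_equispacedNode_conjTranspose_mul_self N
  set U := expMatrix N (equispacedNode N)
  set D := expMatrix N x - U with hD
  have hDnorm : ‖D‖ ≤ (1 - (cos (π * α) - sin (π * α))) * √(2 * N + 1) := by
    rw [hD, expMatrix_eq_add_hadamard, add_sub_cancel_left]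
    exact (norm_hadamard_exp_sub_one_le hα (fun k => equispacedNode_mem_Icc k.2)
      (fun j => hx.abs_nodeShift_le j.2) U).trans
      (mul_le_mul_of_nonneg_left (l2_opNorm_le_sqrt_of_conjTranspose_mul_self hU) hgap)
  have hDv : ‖WithLp.toLp 2 (D *ᵥ v)‖ ≤
      (1 - (cos (π * α) - sin (π * α))) * √(2 * N + 1) * ‖WithLp.toLp 2 v‖ :=
    (Matrix.l2_opNorm_mulVec D (WithLp.toLp 2 v)).trans
      (mul_le_mul_of_nonneg_right hDnorm (norm_nonneg _))
  have hUv : ‖WithLp.toLp 2 (U *ᵥ v)‖ = √(2 * N + 1) * ‖WithLp.toLp 2 v‖ :=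
    norm_mulVec_of_conjTranspose_mul_self hU v
  have hsplit : WithLp.toLp 2 (U *ᵥ v) =
      WithLp.toLp 2 (expMatrix N x *ᵥ v) - WithLp.toLp 2 (D *ᵥ v) := by
    rw [← WithLp.toLp_sub, ← Matrix.sub_mulVec, hD, sub_sub_cancel]
  have htri := norm_sub_le (WithLp.toLp 2 (expMatrix N x *ᵥ v)) (WithLp.toLp 2 (D *ᵥ v))
  rw [← hsplit, hUv] at htri
  linarith

theorem integral_exp_I_mul_int_mul (k : ℤ) :
    ∫ t in (-π)..π, Complex.exp (Complex.I * k * t) = if k = 0 then (2 * π : ℂ) else 0 := by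
  split_ifs with hk
  · simp [hk, two_mul]
  · have hc : Complex.I * k ≠ 0 := mul_ne_zero Complex.I_ne_zero (Int.cast_ne_zero.2 hk)
    have hperiod : Complex.exp (Complex.I * k * π) = Complex.exp (Complex.I * k * (-π : ℝ)) :=
      Complex.exp_eq_exp_iff_exists_int.2 ⟨k, by push_cast; ring⟩
    rw [integral_exp_mul_complex hc, hperiod, sub_self, zero_div]

theorem isTrigPoly_exp {N : ℕ} {k : ℤ} (hk : k ∈ Finset.Icc (-(N : ℤ)) N) :
    IsTrigPoly N fun t => Complex.exp (Complex.I * k * t) :=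
  ⟨fun l => if l = k then 1 else 0, fun t => by
    simp only [ite_mul, one_mul, zero_mul, Finset.sum_ite_eq', if_pos hk]⟩

theorem ExactQuad.sum_mul_exp {N : ℕ} {x w : ℤ → ℝ} (hw : ExactQuad N x w) {k : ℤ}
    (hk : k ∈ Finset.Icc (-(N : ℤ)) N) :
    ∑ j ∈ Finset.Icc (-(N : ℤ)) N, (w j : ℂ) * Complex.exp (Complex.I * k * x j) =
      if k = 0 then (2 * π : ℂ) else 0 :=
  (hw _ (isTrigPoly_exp hk)).trans (integral_exp_I_mul_int_mul k)

theorem ExactQuad.two_pi_le_sum_abs {N : ℕ} {x w : ℤ → ℝ} (hw : ExactQuad N x w) :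
    2 * π ≤ ∑ j ∈ Finset.Icc (-(N : ℤ)) N, |w j| := by
  have hsum : ∑ j ∈ Finset.Icc (-(N : ℤ)) N, w j = 2 * π := by
    exact_mod_cast (by simpa using hw.sum_mul_exp (k := 0) (by simp) :
      ∑ j ∈ Finset.Icc (-(N : ℤ)) N, (w j : ℂ) = 2 * π)
  exact hsum ▸ Finset.sum_le_sum fun j _ => le_abs_self (w j)

theorem ExactQuad.expMatrix_mulVec {N : ℕ} {x w : ℤ → ℝ} (hw : ExactQuad N x w) :
    expMatrix N x *ᵥ (fun j => (w j : ℂ)) = Pi.single ⟨0, by simp⟩ (2 * π : ℂ) := by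
  ext k
  rw [Pi.single_apply, Matrix.mulVec, dotProduct]
  simp only [Subtype.ext_iff, ← hw.sum_mul_exp k.2, expMatrix, Matrix.of_apply]
  rw [← Finset.sum_coe_sort (M := ℂ) (Finset.Icc (-(N : ℤ)) N)]
  exact Finset.sum_congr rfl fun j _ => mul_comm _ _

theorem sum_norm_le_sqrt_card_mul_norm_toLp {ι E : Type*} [Fintype ι] [SeminormedAddCommGroup E]
    (v : ι → E) : ∑ i, ‖v i‖ ≤ √(Fintype.card ι) * ‖WithLp.toLp 2 v‖ := by
  rw [PiLp.norm_eq_of_L2, ← Real.sqrt_mul (Nat.cast_nonneg _)]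
  exact Real.le_sqrt_of_sq_le sq_sum_le_card_mul_sum_sq

theorem cos_sub_sin_pi_mul_pos {α : ℝ} (hα0 : 0 ≤ α) (hα : α < 1 / 4) :
    0 < cos (π * α) - sin (π * α) := by
  have hπα0 : 0 ≤ π * α := mul_nonneg pi_pos.le hα0
  have hπα : π * α < π / 4 := by linarith [mul_lt_mul_of_pos_left hα pi_pos]
  rw [sub_pos, ← cos_pi_div_two_sub]
  exact cos_lt_cos_of_nonneg_of_le_pi hπα0 (by linarith) (by linarith)

theorem ExactQuad.sum_abs_le {N : ℕ} {α : ℝ} (hα : α < 1 / 4) {x w : ℤ → ℝ}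
    (hw : ExactQuad N x w) (hx : PerturbedNodes N α x) :
    ∑ j ∈ Finset.Icc (-(N : ℤ)) N, |w j| ≤ 2 * π / (cos (π * α) - sin (π * α)) := by
  have hgap := cos_sub_sin_pi_mul_pos hx.nonneg hα
  let v : Finset.Icc (-(N : ℤ)) N → ℂ := fun j => w j
  have hcauchy : ∑ j ∈ Finset.Icc (-(N : ℤ)) N, |w j| ≤ √(2 * N + 1) * ‖WithLp.toLp 2 v‖ := by
    have hnorm := sum_norm_le_sqrt_card_mul_norm_toLp v
    simp only [v, Complex.norm_real, Real.norm_eq_abs, Fintype.card_coe,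
      card_Icc_neg_natCast] at hnorm
    rw [Finset.sum_coe_sort (Finset.Icc (-(N : ℤ)) N) fun j => |w j|] at hnorm
    exact_mod_cast hnorm
  have hmoment : ‖WithLp.toLp 2 (expMatrix N x *ᵥ v)‖ = 2 * π := by
    rw [hw.expMatrix_mulVec, PiLp.toLp_single, PiLp.norm_single, norm_mul, Complex.norm_real,
      Complex.norm_two, norm_of_nonneg pi_pos.le]
  rw [le_div_iff₀' hgap]
  calc (cos (π * α) - sin (π * α)) * ∑ j ∈ Finset.Icc (-(N : ℤ)) N, |w j|
      ≤ (cos (π * α) - sin (π * α)) * (√(2 * N + 1) * ‖WithLp.toLp 2 v‖) := by gcongr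
    _ ≤ ‖WithLp.toLp 2 (expMatrix N x *ᵥ v)‖ := hx.le_norm_expMatrix_mulVec hα.le v
    _ = 2 * π := hmoment

end OperatorNorm

theorem IsTrigPoly.continuous {N : ℕ} {q : ℝ → ℂ} (hq : IsTrigPoly N q) : Continuous q := by
  obtain ⟨c, hc⟩ := hq
  rw [funext hc]
  fun_prop

theorem norm_le_supIco {g : ℝ → ℂ} {C : ℝ} (hg : ∀ t ∈ Set.Ico (-π) π, ‖g t‖ ≤ C) {t : ℝ}
    (ht : t ∈ Set.Ico (-π) π) : ‖g t‖ ≤ supIco g :=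
  le_ciSup (f := fun s : Set.Ico (-π) π => ‖g s‖)
    ⟨C, Set.forall_mem_range.2 fun s => hg s s.2⟩ ⟨t, ht⟩

theorem norm_integral_le_two_pi_mul {E : Type*} [NormedAddCommGroup E] [NormedSpace ℝ E]
    {g : ℝ → E} {C : ℝ} (hg : ∀ t ∈ Set.Ico (-π) π, ‖g t‖ ≤ C) :
    ‖∫ t in (-π)..π, g t‖ ≤ 2 * π * C := by
  have hae : ∀ᵐ t, t ∈ Set.uIoc (-π) π → ‖g t‖ ≤ C := by
    filter_upwards [MeasureTheory.Measure.ae_ne MeasureTheory.volume π] with t hne ht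
    rw [Set.uIoc_of_le (neg_le_self pi_pos.le)] at ht
    exact hg t ⟨ht.1.le, ht.2.lt_of_ne hne⟩
  refine (intervalIntegral.norm_integral_le_of_norm_le_const_ae hae).trans_eq ?_
  rw [sub_neg_eq_add, ← two_mul, abs_of_pos two_pi_pos, mul_comm]

theorem ExactQuad.norm_sum_sub_integral_le {N : ℕ} {x w : ℤ → ℝ} (hw : ExactQuad N x w)
    (hx : ∀ j ∈ Finset.Icc (-(N : ℤ)) N, x j ∈ Set.Ico (-π) π) {f : ℝ → ℂ}
    (hf : IntervalIntegrable f MeasureTheory.volume (-π) π) {q : ℝ → ℂ} (hq : IsTrigPoly N q)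
    {M : ℝ} (hM : ∀ t ∈ Set.Ico (-π) π, ‖f t - q t‖ ≤ M) :
    ‖(∑ j ∈ Finset.Icc (-(N : ℤ)) N, (w j : ℂ) * f (x j)) - ∫ t in (-π)..π, f t‖ ≤
      2 * (∑ j ∈ Finset.Icc (-(N : ℤ)) N, |w j|) * M := by
  have hM0 : 0 ≤ M := (norm_nonneg _).trans (hM 0 ⟨by linarith [pi_pos], pi_pos⟩)
  have herror : (∑ j ∈ Finset.Icc (-(N : ℤ)) N, (w j : ℂ) * f (x j)) - ∫ t in (-π)..π, f t =
      (∑ j ∈ Finset.Icc (-(N : ℤ)) N, (w j : ℂ) * (f (x j) - q (x j))) -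
        ∫ t in (-π)..π, (f t - q t) := by
    rw [intervalIntegral.integral_sub hf (hq.continuous.intervalIntegrable _ _), ← hw q hq]
    simp only [mul_sub, Finset.sum_sub_distrib]
    ring
  have hsum : ‖∑ j ∈ Finset.Icc (-(N : ℤ)) N, (w j : ℂ) * (f (x j) - q (x j))‖ ≤
      (∑ j ∈ Finset.Icc (-(N : ℤ)) N, |w j|) * M := by
    rw [Finset.sum_mul]
    refine norm_sum_le_of_le _ fun j hj => ?_
    rw [norm_mul, Complex.norm_real, Real.norm_eq_abs]
    exact mul_le_mul_of_nonneg_left (hM _ (hx j hj)) (abs_nonneg _)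
  rw [herror]
  refine (norm_sub_le _ _).trans ?_
  linarith [norm_integral_le_two_pi_mul hM,
    mul_le_mul_of_nonneg_right hw.two_pi_le_sum_abs hM0]

theorem quadrature_error_bound_general {f : ℝ → ℂ}
    (hf : IntervalIntegrable f MeasureTheory.volume (-π) π) {C : ℝ}
    (hfC : ∀ t ∈ Set.Ico (-π) π, ‖f t‖ ≤ C) {α : ℝ} (hα : α < 1 / 4) {N : ℕ} {x : ℤ → ℝ}
    (hx : PerturbedNodes N α x) {w : ℤ → ℝ} (hw : ExactQuad N x w) {q : ℝ → ℂ}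
    (hq : IsTrigPoly N q) :
    ‖(∑ j ∈ Finset.Icc (-(N : ℤ)) N, (w j : ℂ) * f (x j)) - ∫ t in (-π)..π, f t‖ ≤
      4 * π / (cos (π * α) - sin (π * α)) * supIco fun t => f t - q t := by
  obtain ⟨K, hK⟩ := isCompact_Icc.exists_bound_of_continuousOn
    (hq.continuous.continuousOn (s := Set.Icc (-π) π))
  have hsup {t : ℝ} (ht : t ∈ Set.Ico (-π) π) : ‖f t - q t‖ ≤ supIco fun t => f t - q t :=
    norm_le_supIco (C := C + K) (fun s hs => (norm_sub_le _ _).trans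
      (add_le_add (hfC s hs) (hK s (Set.Ico_subset_Icc_self hs)))) ht
  have hnonneg : 0 ≤ supIco fun t => f t - q t := Real.iSup_nonneg fun _ => norm_nonneg _
  refine (hw.norm_sum_sub_integral_le (fun j => hx.mem_Ico (by linarith)) hf hq
    fun t => hsup).trans (mul_le_mul_of_nonneg_right ?_ hnonneg)
  calc 2 * ∑ j ∈ Finset.Icc (-(N : ℤ)) N, |w j|
      ≤ 2 * (2 * π / (cos (π * α) - sin (π * α))) := by gcongr; exact hw.sum_abs_le hα hx
    _ = 4 * π / (cos (π * α) - sin (π * α)) := by ring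

/-- quadrature error bound at α-perturbed nodes for α < 1/4 in terms of the
best approximation error of the integrand by trigonometric polynomials. -/
theorem quadrature_error_bound (f : ℝ → ℂ) (hfc : Continuous f)
    (hfp : Function.Periodic f (2*π))
    (α : ℝ) (hα0 : 0 ≤ α) (hα : α < 1/4) (N : ℕ) (hN : 0 < N)
    (x : ℤ → ℝ) (hx : PerturbedNodes N α x)
    (w : ℤ → ℝ) (hw : ExactQuad N x w) :
    ∀ q : ℝ → ℂ, IsTrigPoly N q →
      ‖(∑ j ∈ Finset.Icc (-(N:ℤ)) (N:ℤ), (w j : ℂ) * f (x j)) - ∫ t in (-π)..π, f t‖ ≤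
        (4*π / (Real.cos (π*α) - Real.sin (π*α))) * supIco (fun t => f t - q t) := by
  intro q hq
  obtain ⟨C, hC⟩ := isCompact_Icc.exists_bound_of_continuousOn
    (hfc.continuousOn (s := Set.Icc (-π) π))
  exact quadrature_error_bound_general (hfc.intervalIntegrable _ _)
    (fun t ht => hC t (Set.Ico_subset_Icc_self ht)) hα hx hw hq
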